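/- arXiv:2105.01045 — 2 statements merged into one kernel-verified Lean document; each statement's English description precedes it below -/
import Mathlib

section
/- The function φ : [0,∞) → ℝ defined by φ(t) = √t · log₂(√t + 1) is concave on [0,∞). -/
/-!
If `g` is concave on `[0, ∞)` and `g 0 ≥ 0`, then `t ↦ √t * g √t` is concave, being the
perspective `(t, r) ↦ r * g (t / r)` of `g` restricted to the concave curve `r = √t`. Indeed, for
`z = a x + b y` with `a + b = 1`, concavity of the square root gives `a √x + b √y ≤ √z`, so
Jensen's inequality applies to the points `√x`, `√y`, `0` with weights `a √x / √z`, `b √y / √z`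
and the remaining mass; their barycentre is `z / √z = √z`.
-/

open Set

section Perspective

variable {𝕜 E β : Type*} [Field 𝕜] [LinearOrder 𝕜] [IsStrictOrderedRing 𝕜]
  [AddCommGroup E] [Module 𝕜 E]
  [AddCommGroup β] [PartialOrder β] [IsOrderedAddMonoid β] [Module 𝕜 β] [IsStrictOrderedModule 𝕜 β]
  {s t : Set E} {g : E → β}

theorem smul_add_smul_le_map_of_concaveOn_of_add_le_one (hg : ConcaveOn 𝕜 t g) (ht : 0 ∈ t)
    (hg₀ : 0 ≤ g 0) {x y : E} (hx : x ∈ t) (hy : y ∈ t) {a b : 𝕜} (ha : 0 ≤ a) (hb : 0 ≤ b)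
    (hab : a + b ≤ 1) : a • g x + b • g y ≤ g (a • x + b • y) := by
  have hc : 0 ≤ 1 - (a + b) := sub_nonneg.2 hab
  have jensen : (1 - (a + b)) • g 0 + (a • g x + b • g y) ≤ g (a • x + b • y) := by
    simpa using hg.map_add_sum_le (t := Finset.univ) (w := ![a, b]) (p := ![x, y])
      (by simp [ha, hb]) (by simp) (by simp [hx, hy]) hc ht
  exact (le_add_of_nonneg_left (smul_nonneg hc hg₀)).trans jensen

theorem smul_add_smul_le_smul_map_of_concaveOn (hg : ConcaveOn 𝕜 t g) (ht : 0 ∈ t)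
    (hg₀ : 0 ≤ g 0) {x y z : E} (hx : x ∈ t) (hy : y ∈ t) {a b c : 𝕜} (ha : 0 ≤ a) (hb : 0 ≤ b)
    (hab : a + b ≤ c) (hz : a • x + b • y = c • z) : a • g x + b • g y ≤ c • g z := by
  obtain rfl | hc := ((add_nonneg ha hb).trans hab).eq_or_lt
  · obtain ⟨rfl, rfl⟩ := (add_eq_zero_iff_of_nonneg ha hb).1 (hab.antisymm (add_nonneg ha hb))
    simp
  have hz' : (c⁻¹ * a) • x + (c⁻¹ * b) • y = z := by
    rw [mul_smul, mul_smul, ← smul_add, hz, inv_smul_smul₀ hc.ne']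
  have hab' : c⁻¹ * a + c⁻¹ * b ≤ 1 := by
    rwa [← mul_add, inv_mul_le_one₀ hc]
  calc a • g x + b • g y
      = c • ((c⁻¹ * a) • g x + (c⁻¹ * b) • g y) := by
        rw [mul_smul, mul_smul, ← smul_add, smul_inv_smul₀ hc.ne']
    _ ≤ c • g ((c⁻¹ * a) • x + (c⁻¹ * b) • y) := by
        gcongr
        exact smul_add_smul_le_map_of_concaveOn_of_add_le_one hg ht hg₀ hx hy
          (by positivity) (by positivity) hab'
    _ = c • g z := by rw [hz']

-- The condition `f x • u x = x` encodes `u x = x / f x`, and allows `f` to vanish at `0`.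
theorem concaveOn_smul_comp_of_smul_eq_self {f : E → 𝕜} {u : E → E} (hf : ConcaveOn 𝕜 s f)
    (hf₀ : ∀ x ∈ s, 0 ≤ f x) (hu : ∀ x ∈ s, f x • u x = x) (hut : MapsTo u s t)
    (hg : ConcaveOn 𝕜 t g) (ht : 0 ∈ t) (hg₀ : 0 ≤ g 0) :
    ConcaveOn 𝕜 s fun x ↦ f x • g (u x) := by
  refine ⟨hf.1, fun x hx y hy a b ha hb hab ↦ ?_⟩
  have hbary : (a * f x) • u x + (b * f y) • u y = f (a • x + b • y) • u (a • x + b • y) := by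
    rw [mul_smul, mul_smul, hu x hx, hu y hy, hu _ (hf.1 hx hy ha hb hab)]
  simpa only [mul_smul] using
    smul_add_smul_le_smul_map_of_concaveOn hg ht hg₀ (hut hx) (hut hy)
      (mul_nonneg ha (hf₀ x hx)) (mul_nonneg hb (hf₀ y hy)) (hf.2 hx hy ha hb hab) hbary

end Perspective

theorem concaveOn_sqrt_smul_comp_sqrt {β : Type*} [AddCommGroup β] [PartialOrder β]
    [IsOrderedAddMonoid β] [Module ℝ β] [IsStrictOrderedModule ℝ β] {g : ℝ → β}
    (hg : ConcaveOn ℝ (Ici 0) g) (hg₀ : 0 ≤ g 0) :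
    ConcaveOn ℝ (Ici 0) fun t ↦ √t • g √t :=
  concaveOn_smul_comp_of_smul_eq_self Real.strictConcaveOn_sqrt.concaveOn
    (fun t _ ↦ Real.sqrt_nonneg t) (fun _ ht ↦ Real.mul_self_sqrt ht)
    (fun t _ ↦ Real.sqrt_nonneg t) hg self_mem_Ici hg₀

theorem concaveOn_logb_Ioi {b : ℝ} (hb : 1 ≤ b) : ConcaveOn ℝ (Ioi 0) (Real.logb b) := by
  have hlog : ConcaveOn ℝ (Ioi 0) fun x ↦ (Real.log b)⁻¹ • Real.log x :=
    strictConcaveOn_log_Ioi.concaveOn.smul (inv_nonneg.2 (Real.log_nonneg hb))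
  exact hlog.congr fun x _ ↦ inv_mul_eq_div _ _

/-- The function `φ(t) = √t·log₂(√t + 1)` is concave on `[0,∞)`. -/
theorem sqrt_mul_logb_concave :
    ConcaveOn ℝ (Set.Ici (0 : ℝ))
      (fun t => Real.sqrt t * Real.logb 2 (Real.sqrt t + 1)) := by
  have hlogb : ConcaveOn ℝ (Ici 0) fun x ↦ Real.logb 2 (x + 1) :=
    ((concaveOn_logb_Ioi one_le_two).translate_left 1).subset
      (fun x (hx : 0 ≤ x) ↦ show 0 < 1 + x by positivity) (convex_Ici 0)
  exact concaveOn_sqrt_smul_comp_sqrt hlogb (by simp)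
end

section
/- Let c > 1 and λ > 1 be reals, n ≥ 1 an integer, and let f : [0,∞) → [0,∞) be a non-increasing probability density function satisfying ∫_x^∞ f(t) dt ≤ c·x^(−λ) for all x > 0. Then ∫₀^∞ 92·√(n·f(x))·log₂(√(n·f(x)) + 1) dx ≤ 276·(c·(λ+1))^(1/λ)·√n·log₂(√n + 1)/min(λ − 1, 1). -/
/-!
Put `K = √n · log₂(√n + 1)`. Since `log₂(r·s + 1) ≤ r · log₂(s + 1)` for `r ≥ 1`, one has
`√(n·y) · log₂(√(n·y) + 1) ≤ K · max (√y) y` for every `y ≥ 0`, so it suffices to bound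
`∫ max (√f) f`. Bounding the maximum by `1 + f` on `(0, t₀]` and by `√f + f` on `(t₀, ∞)` gives
`t₀ + 1 + ∫_{t₀}^∞ √f`. The last integral is controlled by Cauchy–Schwarz with the weight
`x ^ ((λ + 1) / 2)`, which trades `√f` for a truncated moment of `f`; the layer-cake formula bounds
that moment by means of the tail hypothesis.
-/

open MeasureTheory

open Set
open scoped ENNReal

lemma logb_mul_add_one_le {b r s : ℝ} (hb : 1 < b) (hr : 1 ≤ r) (hs : 0 ≤ s) :
    Real.logb b (r * s + 1) ≤ r * Real.logb b (s + 1) := by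
  rw [← Real.logb_rpow_eq_mul_logb_of_pos (by positivity)]
  apply Real.logb_le_logb_of_le hb (by positivity)
  simpa only [add_comm] using one_add_mul_self_le_rpow_one_add (by linarith : -1 ≤ s) hr

lemma mul_logb_mul_add_one_le {b r s : ℝ} (hb : 1 < b) (hr : 0 ≤ r) (hs : 0 ≤ s) :
    (r * s) * Real.logb b (r * s + 1) ≤ s * Real.logb b (s + 1) * max r (r ^ 2) := by
  have hlog : 0 ≤ Real.logb b (s + 1) := Real.logb_nonneg hb (by linarith)
  rcases le_total r 1 with hr1 | hr1
  · calc (r * s) * Real.logb b (r * s + 1) ≤ (r * s) * Real.logb b (s + 1) := by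
          gcongr
          exact mul_le_of_le_one_left hs hr1
      _ = s * Real.logb b (s + 1) * r := by ring
      _ ≤ s * Real.logb b (s + 1) * max r (r ^ 2) := by gcongr; exact le_max_left _ _
  · calc (r * s) * Real.logb b (r * s + 1) ≤ (r * s) * (r * Real.logb b (s + 1)) := by
          gcongr
          exact logb_mul_add_one_le hb hr1 hs
      _ = s * Real.logb b (s + 1) * r ^ 2 := by ring
      _ ≤ s * Real.logb b (s + 1) * max r (r ^ 2) := by gcongr; exact le_max_right _ _

lemma ofReal_sqrt_mul_logb_le {b a y : ℝ} (hb : 1 < b) (ha : 0 ≤ a) (hy : 0 ≤ y) :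
    ENNReal.ofReal (√(a * y) * Real.logb b (√(a * y) + 1)) ≤
      ENNReal.ofReal (√a * Real.logb b (√a + 1)) *
        max (ENNReal.ofReal y ^ (1 / 2 : ℝ)) (ENNReal.ofReal y) := by
  have hmax : max (ENNReal.ofReal y ^ (1 / 2 : ℝ)) (ENNReal.ofReal y) =
      ENNReal.ofReal (max √y (√y ^ 2)) := by
    rw [ENNReal.ofReal_max, Real.sq_sqrt hy, Real.sqrt_eq_rpow,
      ENNReal.ofReal_rpow_of_nonneg hy (by norm_num)]
  rw [hmax, ← ENNReal.ofReal_mul' (le_max_of_le_left (Real.sqrt_nonneg y)), Real.sqrt_mul ha,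
    mul_comm √a]
  exact ENNReal.ofReal_le_ofReal
    (mul_logb_mul_add_one_le hb (Real.sqrt_nonneg y) (Real.sqrt_nonneg a))

lemma lintegral_Ioc_rpow_sub_one {p t : ℝ} (hp : 0 < p) (ht : 0 ≤ t) :
    ∫⁻ x in Ioc 0 t, ENNReal.ofReal (x ^ (p - 1)) = ENNReal.ofReal (t ^ p / p) := by
  have hint : IntegrableOn (fun x : ℝ ↦ x ^ (p - 1)) (Ioc 0 t) :=
    (intervalIntegrable_iff_integrableOn_Ioc_of_le ht).mp
      (intervalIntegral.intervalIntegrable_rpow' (by linarith))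
  rw [← ofReal_integral_eq_lintegral_ofReal hint
    ((ae_restrict_mem measurableSet_Ioc).mono fun x hx ↦ Real.rpow_nonneg hx.1.le _),
    ← intervalIntegral.integral_of_le ht, integral_rpow (Or.inl (by linarith)),
    sub_add_cancel, Real.zero_rpow hp.ne', sub_zero]

lemma lintegral_Ioi_rpow_neg_sub_one {q t : ℝ} (hq : 0 < q) (ht : 0 < t) :
    ∫⁻ x in Ioi t, ENNReal.ofReal (x ^ (-q - 1)) = ENNReal.ofReal (t ^ (-q) / q) := by
  rw [← ofReal_integral_eq_lintegral_ofReal (integrableOn_Ioi_rpow_of_lt (by linarith) ht)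
    ((ae_restrict_mem measurableSet_Ioi).mono fun x hx ↦ Real.rpow_nonneg (ht.trans hx).le _),
    integral_Ioi_rpow_of_lt (by linarith) ht, sub_add_cancel, neg_div_neg_eq]

lemma setLIntegral_rpow_eq_lintegral_tail (μ : Measure ℝ) {p t : ℝ} (hp : 0 < p) (ht : 0 ≤ t) :
    ∫⁻ x in Ioi t, ENNReal.ofReal (x ^ p) ∂μ =
      ENNReal.ofReal p *
        ∫⁻ s in Ioi 0, μ (Ioi (max s t)) * ENNReal.ofReal (s ^ (p - 1)) := by
  have hnonneg : 0 ≤ᵐ[μ.restrict (Ioi t)] (fun x : ℝ ↦ x) :=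
    (ae_restrict_mem measurableSet_Ioi).mono fun x hx ↦ ht.trans (le_of_lt hx)
  rw [lintegral_rpow_eq_lintegral_meas_lt_mul _ hnonneg aemeasurable_id hp]
  congr! 4 with s
  change μ.restrict (Ioi t) (Ioi s) = _
  rw [Measure.restrict_apply measurableSet_Ioi, Ioi_inter_Ioi]

lemma setLIntegral_rpow_le_of_tail_le {μ : Measure ℝ} {c p r t : ℝ} (hc : 0 ≤ c) (hp : 0 < p)
    (hpr : p < r) (ht : 0 < t) (htail : ∀ x, t ≤ x → μ (Ioi x) ≤ ENNReal.ofReal (c * x ^ (-r))) :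
    ∫⁻ x in Ioi t, ENNReal.ofReal (x ^ p) ∂μ ≤
      ENNReal.ofReal (c * r / (r - p) * t ^ (p - r)) := by
  have hrp : 0 < r - p := sub_pos.mpr hpr
  have hhead : ∫⁻ s in Ioc 0 t, μ (Ioi (max s t)) * ENNReal.ofReal (s ^ (p - 1)) ≤
      ENNReal.ofReal (c * t ^ (-r) * (t ^ p / p)) := by
    rw [ENNReal.ofReal_mul (by positivity), ← lintegral_Ioc_rpow_sub_one hp ht.le,
      ← lintegral_const_mul' _ _ ENNReal.ofReal_ne_top]
    refine setLIntegral_mono' measurableSet_Ioc fun s hs ↦ ?_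
    rw [max_eq_right hs.2]
    gcongr
    exact htail t le_rfl
  have hfar : ∫⁻ s in Ioi t, μ (Ioi (max s t)) * ENNReal.ofReal (s ^ (p - 1)) ≤
      ENNReal.ofReal (c * (t ^ (-(r - p)) / (r - p))) := by
    rw [ENNReal.ofReal_mul hc, ← lintegral_Ioi_rpow_neg_sub_one hrp ht,
      ← lintegral_const_mul' _ _ ENNReal.ofReal_ne_top]
    refine setLIntegral_mono' measurableSet_Ioi fun s hs ↦ ?_
    have hs0 : 0 < s := ht.trans hs
    rw [max_eq_left (le_of_lt hs), show -(r - p) - 1 = -r + (p - 1) by ring,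
      Real.rpow_add hs0, ENNReal.ofReal_mul (by positivity), ← mul_assoc, ← ENNReal.ofReal_mul hc]
    gcongr
    exact htail s (le_of_lt hs)
  calc ∫⁻ x in Ioi t, ENNReal.ofReal (x ^ p) ∂μ
    _ ≤ ENNReal.ofReal p * (ENNReal.ofReal (c * t ^ (-r) * (t ^ p / p)) +
          ENNReal.ofReal (c * (t ^ (-(r - p)) / (r - p)))) := by
      rw [setLIntegral_rpow_eq_lintegral_tail μ hp ht.le, ← Ioc_union_Ioi_eq_Ioi ht.le,
        lintegral_union measurableSet_Ioi (Ioc_disjoint_Ioi le_rfl)]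
      gcongr
    _ = ENNReal.ofReal (c * r / (r - p) * t ^ (p - r)) := by
      rw [← ENNReal.ofReal_add (by positivity) (by positivity), ← ENNReal.ofReal_mul hp.le,
        neg_sub, sub_eq_neg_add p r, Real.rpow_add ht]
      congr 1
      field_simp
      ring

lemma setLIntegral_rpow_half_le_mul_rpow {f : ℝ → ℝ≥0∞} {p t : ℝ} (hp : 1 < p) (ht : 0 < t)
    (hf : AEMeasurable f (volume.restrict (Ioi t))) :
    ∫⁻ x in Ioi t, f x ^ (1 / 2 : ℝ) ≤
      (∫⁻ x in Ioi t, f x * ENNReal.ofReal (x ^ p)) ^ (1 / 2 : ℝ) *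
        ENNReal.ofReal (t ^ (1 - p) / (p - 1)) ^ (1 / 2 : ℝ) := by
  have hweight : ∫⁻ x in Ioi t, ENNReal.ofReal (x ^ (-p)) =
      ENNReal.ofReal (t ^ (1 - p) / (p - 1)) := by
    simpa [sub_sub] using lintegral_Ioi_rpow_neg_sub_one (sub_pos.mpr hp) ht
  have hsplit : ∀ x ∈ Ioi t, f x ^ (1 / 2 : ℝ) =
      (f x * ENNReal.ofReal (x ^ p)) ^ (1 / 2 : ℝ) *
        ENNReal.ofReal (x ^ (-p)) ^ (1 / 2 : ℝ) := fun x hx ↦ by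
    have hx0 : 0 < x := ht.trans hx
    rw [← ENNReal.mul_rpow_of_nonneg _ _ (by norm_num), mul_assoc,
      ← ENNReal.ofReal_mul (by positivity), ← Real.rpow_add hx0, add_neg_cancel, Real.rpow_zero,
      ENNReal.ofReal_one, mul_one]
  rw [setLIntegral_congr_fun measurableSet_Ioi hsplit, ← hweight]
  exact ENNReal.lintegral_mul_norm_pow_le (hf.mul (by fun_prop)) (by fun_prop) (by norm_num)
    (by norm_num) (by norm_num)

lemma setLIntegral_rpow_half_le_of_tail_le {f : ℝ → ℝ≥0∞} {c r t : ℝ} (hc : 0 ≤ c) (hr : 1 < r)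
    (ht : 0 < t) (hf : AEMeasurable f (volume.restrict (Ioi t)))
    (htail : ∀ x, t ≤ x → ∫⁻ y in Ioi x, f y ≤ ENNReal.ofReal (c * x ^ (-r))) :
    ∫⁻ x in Ioi t, f x ^ (1 / 2 : ℝ) ≤
      ENNReal.ofReal (2 * √(c * r * t ^ (1 - r)) / (r - 1)) := by
  have hr1 : 0 < r - 1 := sub_pos.mpr hr
  -- the exponent midway between `1` and `r` keeps both Cauchy–Schwarz factors finite
  set p := (r + 1) / 2 with hp
  have hp1 : p - 1 = (r - 1) / 2 := by rw [hp]; ring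
  have hpr : r - p = (r - 1) / 2 := by rw [hp]; ring
  have hmoment : ∫⁻ x in Ioi t, f x * ENNReal.ofReal (x ^ p) ≤
      ENNReal.ofReal (c * r / (r - p) * t ^ (p - r)) := by
    have hdensity := setLIntegral_rpow_le_of_tail_le (μ := volume.withDensity f) hc
      (p := p) (r := r) (by linarith) (by linarith) ht
      (by simpa only [withDensity_apply f measurableSet_Ioi] using htail)
    rwa [restrict_withDensity measurableSet_Ioi,
      lintegral_withDensity_eq_lintegral_mul₀ hf (by fun_prop)] at hdensity
  calc ∫⁻ x in Ioi t, f x ^ (1 / 2 : ℝ)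
    _ ≤ ENNReal.ofReal (c * r / (r - p) * t ^ (p - r)) ^ (1 / 2 : ℝ) *
          ENNReal.ofReal (t ^ (1 - p) / (p - 1)) ^ (1 / 2 : ℝ) := by
      grw [setLIntegral_rpow_half_le_mul_rpow (p := p) (by linarith) ht hf, hmoment]
    _ = ENNReal.ofReal √(c * r * t ^ (1 - r) / ((r - 1) / 2) ^ 2) := by
      have hpow : t ^ (p - r) * t ^ (1 - p) = t ^ (1 - r) := by
        rw [← Real.rpow_add ht]; congr 1; ring
      rw [← ENNReal.mul_rpow_of_nonneg _ _ (by norm_num), hpr, hp1,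
        ← ENNReal.ofReal_mul (by positivity), ← hpow, Real.sqrt_eq_rpow,
        ENNReal.ofReal_rpow_of_nonneg (by positivity) (by norm_num)]
      congr 2
      field_simp
    _ = ENNReal.ofReal (2 * √(c * r * t ^ (1 - r)) / (r - 1)) := by
      rw [Real.sqrt_div (by positivity), Real.sqrt_sq (by positivity)]
      congr 1
      field_simp

lemma lintegral_max_rpow_half_le {α : Type*} [MeasurableSpace α] {μ : Measure α} {f : α → ℝ≥0∞}
    (hf : AEMeasurable f μ) {s : Set α} (hs : MeasurableSet s) :
    ∫⁻ x, max (f x ^ (1 / 2 : ℝ)) (f x) ∂μ ≤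
      μ s + ∫⁻ x, f x ∂μ + ∫⁻ x in sᶜ, f x ^ (1 / 2 : ℝ) ∂μ := by
  have hon : ∫⁻ x in s, max (f x ^ (1 / 2 : ℝ)) (f x) ∂μ ≤ μ s + ∫⁻ x in s, f x ∂μ := by
    rw [← setLIntegral_one, ← lintegral_add_left measurable_const]
    refine lintegral_mono fun x ↦ max_le ?_ le_add_self
    rcases le_total (f x) 1 with hx | hx
    · exact (ENNReal.rpow_le_one hx (by norm_num)).trans le_self_add
    · have hsqrt : f x ^ (1 / 2 : ℝ) ≤ f x ^ (1 : ℝ) :=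
        ENNReal.rpow_le_rpow_of_exponent_le hx (by norm_num)
      exact (hsqrt.trans_eq (ENNReal.rpow_one _)).trans le_add_self
  have hoff : ∫⁻ x in sᶜ, max (f x ^ (1 / 2 : ℝ)) (f x) ∂μ ≤
      ∫⁻ x in sᶜ, f x ∂μ + ∫⁻ x in sᶜ, f x ^ (1 / 2 : ℝ) ∂μ := by
    rw [← lintegral_add_left' hf.restrict]
    exact lintegral_mono fun x ↦ max_le le_add_self le_self_add
  rw [← lintegral_add_compl _ hs, ← lintegral_add_compl f hs]
  grw [hon, hoff]
  simp only [add_assoc, le_refl]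

lemma add_one_add_two_mul_sqrt_div_le {r t : ℝ} (hr : 1 < r) (ht : 1 ≤ t)
    (ht' : r ≤ 3 → 3 / 2 ≤ t) :
    t + 1 + 2 * √(t * (r / (r + 1))) / (r - 1) ≤ 3 * t / min (r - 1) 1 := by
  have hr1 : 0 < r - 1 := sub_pos.mpr hr
  set q := √(t * (r / (r + 1))) with hq
  have hqsq : q ^ 2 = t * (r / (r + 1)) := Real.sq_sqrt (by positivity)
  rcases le_total r 2 with hr2 | hr2
  · have hfrac : r / (r + 1) ≤ 2 / 3 := by
      rw [div_le_div_iff₀ (by linarith) (by norm_num)]; linarith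
    have hqle : q ^ 2 ≤ t * (2 / 3) := by rw [hqsq]; gcongr
    rw [min_eq_left (by linarith), le_div_iff₀ hr1, add_mul, div_mul_cancel₀ _ hr1.ne']
    have hamgm : 2 * q ≤ q ^ 2 + 1 := by linarith [two_mul_le_add_sq q 1]
    have hscale : (t + 1) * (r - 1) ≤ t + 1 := mul_le_of_le_one_right (by linarith) (by linarith)
    linarith [ht' (by linarith)]
  rw [min_eq_right (by linarith), div_one, mul_div_assoc]
  set w := q / (r - 1) with hw
  rcases le_total r 3 with hr3 | hr3
  · have hfrac : r / ((r + 1) * (r - 1) ^ 2) ≤ 2 / 3 := by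
      rw [div_le_div_iff₀ (by positivity) (by norm_num)]
      nlinarith [mul_nonneg (sub_nonneg.mpr hr2) (sq_nonneg (r - 1))]
    have hwle : w ^ 2 ≤ t * (2 / 3) := by
      calc w ^ 2 = t * (r / ((r + 1) * (r - 1) ^ 2)) := by
            rw [hw, div_pow, hqsq]; field_simp
        _ ≤ t * (2 / 3) := by gcongr
    have hamgm : 2 * w ≤ w ^ 2 + 1 := by linarith [two_mul_le_add_sq w 1]
    linarith [ht' hr3]
  · have hfrac : r / (r + 1) ≤ 1 := (div_le_one (by linarith)).mpr (by linarith)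
    have hqt : q ≤ t := by
      rw [hq, Real.sqrt_le_left (by linarith)]
      nlinarith
    have hwle : w ≤ q / 2 := by rw [hw]; gcongr; linarith
    linarith

section Cutoff

/-- The point `t₀ = (c (r + 1)) ^ (1 / r)` at which the comparison density of the paper turns from
constant to a power law; the half-line is split there. -/
noncomputable def tailCutoff (c r : ℝ) : ℝ := (c * (r + 1)) ^ (1 / r)

variable {c r : ℝ}

lemma tailCutoff_rpow (hc : 0 ≤ c) (hr : 0 < r) : tailCutoff c r ^ r = c * (r + 1) := by
  rw [tailCutoff, one_div, Real.rpow_inv_rpow (by positivity) hr.ne']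

lemma one_le_tailCutoff (hc : 1 ≤ c) (hr : 0 ≤ r) : 1 ≤ tailCutoff c r :=
  Real.one_le_rpow (by nlinarith) (by positivity)

lemma three_halves_le_tailCutoff (hc : 1 ≤ c) (hr : 0 < r) (hr3 : r ≤ 3) :
    3 / 2 ≤ tailCutoff c r := by
  -- Bernoulli's inequality for the exponent `r / 3 ≤ 1`, with `(3 / 2) ^ 3 = 1 + 19 / 8`
  have hbernoulli : ((3 / 2 : ℝ) ^ 3) ^ (r / 3) ≤ 1 + r / 3 * (19 / 8) := by
    rw [show (3 / 2 : ℝ) ^ 3 = 1 + 19 / 8 by norm_num]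
    exact rpow_one_add_le_one_add_mul_self (by norm_num) (by positivity) (by linarith)
  have hpow : (3 / 2 : ℝ) ^ r ≤ tailCutoff c r ^ r := by
    rw [tailCutoff_rpow (by linarith) hr]
    rw [← Real.rpow_natCast_mul (by norm_num), Nat.cast_ofNat, mul_div_cancel₀ _ (by norm_num)]
      at hbernoulli
    nlinarith
  exact (Real.rpow_le_rpow_iff (by norm_num)
    (zero_le_one.trans (one_le_tailCutoff hc hr.le)) hr).mp hpow

lemma mul_rpow_one_sub_tailCutoff (hc : 0 < c) (hr : 0 < r) :
    c * r * tailCutoff c r ^ (1 - r) = tailCutoff c r * (r / (r + 1)) := by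
  have ht : 0 < tailCutoff c r := Real.rpow_pos_of_pos (by positivity) _
  rw [Real.rpow_sub ht, Real.rpow_one, tailCutoff_rpow hc.le hr]
  field_simp

end Cutoff

lemma setLIntegral_max_rpow_half_le_of_tail_le {f : ℝ → ℝ≥0∞} {c r : ℝ} (hc : 1 ≤ c) (hr : 1 < r)
    (hf : AEMeasurable f (volume.restrict (Ioi 0))) (hmass : ∫⁻ x in Ioi 0, f x ≤ 1)
    (htail : ∀ x, tailCutoff c r ≤ x → ∫⁻ y in Ioi x, f y ≤ ENNReal.ofReal (c * x ^ (-r))) :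
    ∫⁻ x in Ioi 0, max (f x ^ (1 / 2 : ℝ)) (f x) ≤
      ENNReal.ofReal (3 * tailCutoff c r / min (r - 1) 1) := by
  have hr0 : 0 < r := by linarith
  have ht1 : 1 ≤ tailCutoff c r := one_le_tailCutoff hc hr0.le
  have hnum := add_one_add_two_mul_sqrt_div_le hr ht1 (three_halves_le_tailCutoff hc hr0)
  have hsqrt := setLIntegral_rpow_half_le_of_tail_le (by linarith) hr (by linarith)
    (hf.mono_measure (Measure.restrict_mono_set _ (Ioi_subset_Ioi (by linarith)))) htail
  rw [mul_rpow_one_sub_tailCutoff (by linarith) hr0] at hsqrt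
  set t := tailCutoff c r
  have hIoc : volume.restrict (Ioi 0) (Iic t) = ENNReal.ofReal t := by
    rw [Measure.restrict_apply measurableSet_Iic, inter_comm, Ioi_inter_Iic, Real.volume_Ioc,
      sub_zero]
  have hIoi : (volume.restrict (Ioi 0)).restrict (Iic t)ᶜ = volume.restrict (Ioi t) := by
    rw [compl_Iic, Measure.restrict_restrict measurableSet_Ioi, Ioi_inter_Ioi,
      max_eq_left (by linarith)]
  calc ∫⁻ x in Ioi 0, max (f x ^ (1 / 2 : ℝ)) (f x)
    _ ≤ ENNReal.ofReal t + 1 + ENNReal.ofReal (2 * √(t * (r / (r + 1))) / (r - 1)) := by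
      grw [lintegral_max_rpow_half_le hf measurableSet_Iic, hIoc, hIoi, hmass, hsqrt]
    _ = ENNReal.ofReal (t + 1 + 2 * √(t * (r / (r + 1))) / (r - 1)) := by
      have hr1 : 0 < r - 1 := sub_pos.mpr hr
      rw [ENNReal.ofReal_add (by positivity) (by positivity),
        ENNReal.ofReal_add (by positivity) zero_le_one, ENNReal.ofReal_one]
    _ ≤ ENNReal.ofReal (3 * t / min (r - 1) 1) := ENNReal.ofReal_le_ofReal hnum

lemma integral_le_of_lintegral_ofReal_le {α : Type*} [MeasurableSpace α] {μ : Measure α}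
    {g : α → ℝ} {b : ℝ} (hg : 0 ≤ g) (hb : 0 ≤ b)
    (h : ∫⁻ x, ENNReal.ofReal (g x) ∂μ ≤ ENNReal.ofReal b) : ∫ x, g x ∂μ ≤ b := by
  calc ∫ x, g x ∂μ ≤ (∫⁻ x, ENNReal.ofReal ‖g x‖ ∂μ).toReal :=
        (le_abs_self _).trans (norm_integral_le_lintegral_norm g)
    _ ≤ b := ENNReal.toReal_le_of_le_ofReal hb (by simpa only [Real.norm_of_nonneg (hg _)] using h)

lemma integral_sqrt_mul_logb_le_of_tail_le {a b c r : ℝ} (ha : 0 ≤ a) (hb : 1 < b) (hc : 1 ≤ c)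
    (hr : 1 < r) {f : ℝ → ℝ} (hf_nonneg : 0 ≤ᵐ[volume.restrict (Ioi 0)] f)
    (hf : AEMeasurable f (volume.restrict (Ioi 0)))
    (hmass : ∫⁻ x in Ioi 0, ENNReal.ofReal (f x) ≤ 1)
    (htail : ∀ x, tailCutoff c r ≤ x →
      ∫⁻ y in Ioi x, ENNReal.ofReal (f y) ≤ ENNReal.ofReal (c * x ^ (-r))) :
    ∫ x in Ioi 0, √(a * f x) * Real.logb b (√(a * f x) + 1) ≤
      √a * Real.logb b (√a + 1) * (3 * tailCutoff c r / min (r - 1) 1) := by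
  have hfactor (y : ℝ) : 0 ≤ √y * Real.logb b (√y + 1) :=
    mul_nonneg (Real.sqrt_nonneg y) (Real.logb_nonneg hb (by linarith [Real.sqrt_nonneg y]))
  have ht : 0 ≤ tailCutoff c r := zero_le_one.trans (one_le_tailCutoff hc (by linarith))
  have hmin : 0 < min (r - 1) 1 := lt_min (sub_pos.mpr hr) one_pos
  refine integral_le_of_lintegral_ofReal_le (fun x ↦ hfactor _)
    (mul_nonneg (hfactor a) (by positivity)) ?_
  calc ∫⁻ x in Ioi 0, ENNReal.ofReal (√(a * f x) * Real.logb b (√(a * f x) + 1))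
    _ ≤ ∫⁻ x in Ioi 0, ENNReal.ofReal (√a * Real.logb b (√a + 1)) *
          max (ENNReal.ofReal (f x) ^ (1 / 2 : ℝ)) (ENNReal.ofReal (f x)) :=
      lintegral_mono_ae (hf_nonneg.mono fun x hx ↦ ofReal_sqrt_mul_logb_le hb ha hx)
    _ ≤ ENNReal.ofReal (√a * Real.logb b (√a + 1)) *
          ENNReal.ofReal (3 * tailCutoff c r / min (r - 1) 1) := by
      rw [lintegral_const_mul' _ _ ENNReal.ofReal_ne_top]
      grw [setLIntegral_max_rpow_half_le_of_tail_le hc hr hf.ennreal_ofReal hmass htail]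
    _ = ENNReal.ofReal (√a * Real.logb b (√a + 1) * (3 * tailCutoff c r / min (r - 1) 1)) :=
      (ENNReal.ofReal_mul (hfactor a)).symm

theorem pdf_integral_bound_general {c lam a : ℝ} (hc : 1 ≤ c) (hlam : 1 < lam) (ha : 0 ≤ a)
    {f : ℝ → ℝ} (hf_nonneg : 0 ≤ᵐ[volume.restrict (Ioi 0)] f) (hf_int : IntegrableOn f (Ioi 0))
    (hf_mass : ∫ t in Ioi 0, f t ≤ 1)
    (htail : ∀ x : ℝ, 0 < x → ∫ t in Ioi x, f t ≤ c * x ^ (-lam)) :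
    ∫ x in Ioi 0, 92 * √(a * f x) * Real.logb 2 (√(a * f x) + 1) ≤
      276 * (c * (lam + 1)) ^ (1 / lam) * √a * Real.logb 2 (√a + 1) / min (lam - 1) 1 := by
  have hlintegral : ∀ x, 0 ≤ x →
      ∫⁻ y in Ioi x, ENNReal.ofReal (f y) = ENNReal.ofReal (∫ y in Ioi x, f y) := fun x hx ↦
    (ofReal_integral_eq_lintegral_ofReal (hf_int.mono_set (Ioi_subset_Ioi hx))
      (ae_restrict_of_ae_restrict_of_subset (Ioi_subset_Ioi hx) hf_nonneg)).symm
  have hmass : ∫⁻ x in Ioi 0, ENNReal.ofReal (f x) ≤ 1 := by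
    rw [hlintegral 0 le_rfl]
    exact ENNReal.ofReal_le_one.mpr hf_mass
  have htail' : ∀ x, tailCutoff c lam ≤ x →
      ∫⁻ y in Ioi x, ENNReal.ofReal (f y) ≤ ENNReal.ofReal (c * x ^ (-lam)) := fun x hx ↦ by
    have hx0 : 0 < x := by linarith [one_le_tailCutoff hc (by linarith : 0 ≤ lam)]
    exact (hlintegral x hx0.le).trans_le (ENNReal.ofReal_le_ofReal (htail x hx0))
  simp only [mul_assoc (92 : ℝ), integral_const_mul]
  grw [integral_sqrt_mul_logb_le_of_tail_le ha one_lt_two hc hlam hf_nonneg hf_int.aemeasurable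
    hmass htail', tailCutoff]
  exact le_of_eq (by ring)

/-- For any non-increasing pdf `f` on `[0,∞)` with tail bound
`∫_x^∞ f(t) dt ≤ c·x^{-λ}` (`c > 1`, `λ > 1`) and any integer `n ≥ 1`,
`∫₀^∞ 92·√(n·f(x))·log₂(√(n·f(x)) + 1) dx
  ≤ 276·(c·(λ+1))^{1/λ}·√n·log₂(√n + 1)/min(λ − 1, 1)`. -/
theorem pdf_integral_bound
    (c lam : ℝ) (hc : 1 < c) (hlam : 1 < lam) (n : ℕ) (hn : 1 ≤ n)
    (f : ℝ → ℝ) (hf_nonneg : ∀ x, 0 ≤ f x)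
    (hf_anti : AntitoneOn f (Set.Ici (0 : ℝ)))
    (hf_int : IntegrableOn f (Set.Ioi (0 : ℝ)))
    (hf_pdf : ∫ t in Set.Ioi (0 : ℝ), f t = 1)
    (htail : ∀ x : ℝ, 0 < x → ∫ t in Set.Ioi x, f t ≤ c * x ^ (-lam)) :
    ∫ x in Set.Ioi (0 : ℝ),
        92 * Real.sqrt (n * f x) * Real.logb 2 (Real.sqrt (n * f x) + 1)
      ≤ 276 * (c * (lam + 1)) ^ (1 / lam) * Real.sqrt n
          * Real.logb 2 (Real.sqrt n + 1) / min (lam - 1) 1 :=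
  pdf_integral_bound_general hc.le hlam n.cast_nonneg (ae_of_all _ hf_nonneg) hf_int hf_pdf.le htail
end
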